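/- arXiv:1906.03470 — 6 statements merged into one kernel-verified Lean document; each statement's English description precedes it below -/
import Mathlib

section
/- Let π : [0,1] → ℝ be differentiable with π' ≤ 0 on [0,1] (capillary pressure, nonincreasing), with π ≥ 0 and π' interval-integrable, and let f : [0,1] → ℝ be integrable with 0 ≤ f(a) ≤ 1 for all a ∈ [0,1] (fractional flow). Fix s ∈ [0,1] and real phase pressures p_w, p_n with p_n − p_w = π(s). Define β(s) = ∫_1^s (1/2 − f(a)) π'(a) da and the global pressure p = (p_w + p_n)/2 + β(s). Then p_w ≤ p ≤ p_n. -/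
open MeasureTheory

/-- For the global pressure `p = (p_w + p_n)/2 + β(s)` with
`β(s) = ∫_1^s (1/2 − f(a)) π'(a) da`, capillary pressure `π` nonincreasing and
nonnegative on `[0,1]`, fractional flow `f` with values in `[0,1]`, and
`p_n − p_w = π(s)`, one has `p_w ≤ p ≤ p_n`. -/
theorem global_pressure_between_phase_pressures
    (π π' f : ℝ → ℝ)
    (hπdiff : ∀ a ∈ Set.Icc (0:ℝ) 1, HasDerivAt π (π' a) a)
    (hπ'nonpos : ∀ a ∈ Set.Icc (0:ℝ) 1, π' a ≤ 0)
    (hπnonneg : ∀ a ∈ Set.Icc (0:ℝ) 1, 0 ≤ π a)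
    (hπ'int : IntervalIntegrable π' volume 0 1)
    (hfint : IntervalIntegrable f volume 0 1)
    (hf : ∀ a ∈ Set.Icc (0:ℝ) 1, 0 ≤ f a ∧ f a ≤ 1)
    (s pw pn : ℝ) (hs : s ∈ Set.Icc (0:ℝ) 1)
    (hcap : pn - pw = π s) :
    pw ≤ (pw + pn) / 2 + ∫ a in (1:ℝ)..s, (1/2 - f a) * π' a ∧
    (pw + pn) / 2 + (∫ a in (1:ℝ)..s, (1/2 - f a) * π' a) ≤ pn := by
  obtain ⟨h0, h1⟩ := hs
  have hsub : Set.uIcc s 1 ⊆ Set.Icc (0:ℝ) 1 := by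
    rw [Set.uIcc_of_le h1]
    exact Set.Icc_subset_Icc_left h0
  have hint : IntervalIntegrable π' volume s 1 := by
    apply hπ'int.mono_set
    rw [Set.uIcc_of_le (zero_le_one' ℝ)]
    exact hsub
  have hftc : ∫ a in s..1, π' a = π 1 - π s :=
    intervalIntegral.integral_eq_sub_of_hasDerivAt (fun x hx => hπdiff x (hsub hx)) hint
  have hb : ‖∫ a in s..1, (1/2 - f a) * π' a‖ ≤ ∫ a in s..1, (-1/2) * π' a := by
    apply intervalIntegral.norm_integral_le_of_norm_le h1 _ (hint.const_mul _)
    refine Filter.Eventually.of_forall fun t ht => ?_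
    have htI : t ∈ Set.Icc (0:ℝ) 1 := ⟨h0.trans ht.1.le, ht.2⟩
    obtain ⟨hf0, hf1⟩ := hf t htI
    have hp := hπ'nonpos t htI
    rw [Real.norm_eq_abs, abs_le]
    constructor <;> nlinarith
  rw [intervalIntegral.integral_const_mul, hftc, Real.norm_eq_abs, abs_le] at hb
  have hp1 := hπnonneg 1 ⟨zero_le_one, le_rfl⟩
  rw [intervalIntegral.integral_symm s 1]
  obtain ⟨hb1, hb2⟩ := hb
  constructor <;> linarith
end

section
/- Let f : ℝ → ℝ and ξ ∈ ℝ be such that f is nondecreasing on Set.Iic ξ and nonincreasing on Set.Ici ξ (a unimodal flux with a single global maximum at ξ). Then for all a, b ∈ ℝ, the Godunov numerical flux satisfies G f (a, b) = min (f (min a ξ)) (f (max ξ b)). -/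
/-- The Godunov numerical flux: minimum of `f` over `[a,b]` when `a ≤ b`,
maximum of `f` over `[b,a]` when `b < a`. -/
noncomputable def godunov (f : ℝ → ℝ) (a b : ℝ) : ℝ :=
  if a ≤ b then sInf (f '' Set.Icc a b) else sSup (f '' Set.Icc b a)

/-- For a unimodal flux with a single global maximum at `ξ`
(nondecreasing on `Iic ξ`, nonincreasing on `Ici ξ`), the Godunov flux equals
`min (f (min a ξ)) (f (max ξ b))`. -/
theorem godunov_of_unimodal_max (f : ℝ → ℝ) (ξ : ℝ)
    (hmono : MonotoneOn f (Set.Iic ξ)) (hanti : AntitoneOn f (Set.Ici ξ)) :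
    ∀ a b : ℝ, godunov f a b = min (f (min a ξ)) (f (max ξ b)) := by
  intro a b
  have h1 : ∀ x y, x ≤ y → y ≤ ξ → f x ≤ f y := fun x y h h' =>
    hmono (Set.mem_Iic.2 (h.trans h')) (Set.mem_Iic.2 h') h
  have h2 : ∀ x y, ξ ≤ x → x ≤ y → f y ≤ f x := fun x y h h' =>
    hanti (Set.mem_Ici.2 h) (Set.mem_Ici.2 (h.trans h')) h'
  unfold godunov
  split_ifs with hab
  · apply IsLeast.csInf_eq
    rcases le_total a ξ with ha | ha <;> rcases le_total ξ b with hb | hb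
    · rw [min_eq_left ha, max_eq_right hb]
      constructor
      · rcases min_choice (f a) (f b) with h | h <;> rw [h]
        · exact ⟨a, ⟨le_rfl, hab⟩, rfl⟩
        · exact ⟨b, ⟨hab, le_rfl⟩, rfl⟩
      · rintro _ ⟨x, ⟨hx1, hx2⟩, rfl⟩
        rcases le_total x ξ with hx | hx
        · exact (min_le_left _ _).trans (h1 _ _ hx1 hx)
        · exact (min_le_right _ _).trans (h2 _ _ hx hx2)
    · rw [min_eq_left ha, max_eq_left hb, min_eq_left (h1 _ _ ha le_rfl)]
      refine ⟨⟨a, ⟨le_rfl, hab⟩, rfl⟩, ?_⟩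
      rintro _ ⟨x, ⟨hx1, hx2⟩, rfl⟩
      exact h1 _ _ hx1 (hx2.trans hb)
    · rw [min_eq_right ha, max_eq_right hb, min_eq_right (h2 _ _ le_rfl hb)]
      refine ⟨⟨b, ⟨hab, le_rfl⟩, rfl⟩, ?_⟩
      rintro _ ⟨x, ⟨hx1, hx2⟩, rfl⟩
      exact h2 _ _ (ha.trans hx1) hx2
    · have e1 : a = ξ := le_antisymm (hab.trans hb) ha
      have e2 : b = ξ := le_antisymm hb (ha.trans hab)
      subst e1
      subst e2
      simp
  · have hba : b ≤ a := (not_le.1 hab).le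
    apply IsGreatest.csSup_eq
    rcases le_total a ξ with ha | ha
    · rw [min_eq_left ha, max_eq_left (hba.trans ha), min_eq_left (h1 _ _ ha le_rfl)]
      refine ⟨⟨a, ⟨hba, le_rfl⟩, rfl⟩, ?_⟩
      rintro _ ⟨x, ⟨hx1, hx2⟩, rfl⟩
      exact h1 _ _ hx2 ha
    · rw [min_eq_right ha]
      rcases le_total ξ b with hb | hb
      · rw [max_eq_right hb, min_eq_right (h2 _ _ le_rfl hb)]
        refine ⟨⟨b, ⟨le_rfl, hba⟩, rfl⟩, ?_⟩
        rintro _ ⟨x, ⟨hx1, hx2⟩, rfl⟩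
        exact h2 _ _ hb hx1
      · rw [max_eq_left hb, min_self]
        refine ⟨⟨ξ, ⟨hb, ha⟩, rfl⟩, ?_⟩
        rintro _ ⟨x, ⟨hx1, hx2⟩, rfl⟩
        rcases le_total x ξ with hx | hx
        · exact h1 _ _ hx le_rfl
        · exact h2 _ _ le_rfl hx
end

section
/- Let f : ℝ → ℝ and ξ ∈ ℝ be such that f is nonincreasing on Set.Iic ξ and nondecreasing on Set.Ici ξ (a unimodal flux with a single global minimum at ξ). Then for all a, b ∈ ℝ, the Godunov numerical flux satisfies G f (a, b) = max (f (max a ξ)) (f (min ξ b)). -/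
/-- For a unimodal flux with a single global minimum at `ξ`
(nonincreasing on `Iic ξ`, nondecreasing on `Ici ξ`), the Godunov flux equals
`max (f (max a ξ)) (f (min ξ b))`. -/
theorem godunov_of_unimodal_min (f : ℝ → ℝ) (ξ : ℝ)
    (hanti : AntitoneOn f (Set.Iic ξ)) (hmono : MonotoneOn f (Set.Ici ξ)) :
    ∀ a b : ℝ, godunov f a b = max (f (max a ξ)) (f (min ξ b)) := by
  have A : ∀ x y, x ≤ y → y ≤ ξ → f y ≤ f x := fun x y h1 h2 =>
    hanti (Set.mem_Iic.2 (h1.trans h2)) (Set.mem_Iic.2 h2) h1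
  have M : ∀ x y, ξ ≤ x → x ≤ y → f x ≤ f y := fun x y h1 h2 =>
    hmono (Set.mem_Ici.2 h1) (Set.mem_Ici.2 (h1.trans h2)) h2
  have X : ∀ x, f ξ ≤ f x := fun x => by
    rcases le_total x ξ with h | h
    · exact A x ξ h le_rfl
    · exact M ξ x le_rfl h
  intro a b
  unfold godunov
  split_ifs with hab
  · apply IsLeast.csInf_eq
    rcases le_total ξ a with h | h
    · rw [max_eq_left h, min_eq_left (h.trans hab), max_eq_left (X a)]
      refine ⟨⟨a, ⟨le_rfl, hab⟩, rfl⟩, ?_⟩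
      rintro _ ⟨x, hx, rfl⟩
      exact M a x h hx.1
    · rw [max_eq_right h, max_eq_right (X _)]
      refine ⟨⟨min ξ b, ⟨le_min h hab, min_le_right _ _⟩, rfl⟩, ?_⟩
      rintro _ ⟨x, hx, rfl⟩
      rcases le_total ξ b with h' | h'
      · rw [min_eq_left h']
        exact X x
      · rw [min_eq_right h']
        exact A x b hx.2 h'
  · have hba : b ≤ a := (not_le.1 hab).le
    apply IsGreatest.csSup_eq
    constructor
    · rcases le_total ξ a with h | h
      · rw [max_eq_left h]
        rcases le_total ξ b with h' | h'
        · rw [min_eq_left h', max_eq_left (X a)]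
          exact ⟨a, ⟨hba, le_rfl⟩, rfl⟩
        · rw [min_eq_right h']
          rcases max_choice (f a) (f b) with e | e
          · rw [e]
            exact ⟨a, ⟨hba, le_rfl⟩, rfl⟩
          · rw [e]
            exact ⟨b, ⟨le_rfl, hba⟩, rfl⟩
      · rw [max_eq_right h, min_eq_right (hba.trans h), max_eq_right (X b)]
        exact ⟨b, ⟨le_rfl, hba⟩, rfl⟩
    · rintro _ ⟨x, hx, rfl⟩
      rcases le_total ξ x with h | h
      · exact le_max_of_le_left (M x _ h (le_max_of_le_left hx.2))
      · exact le_max_of_le_right (A _ x (min_le_of_right_le hx.1) h)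
end

section
/- Let f : ℝ → ℝ be continuous. Then the Godunov numerical flux G f is nondecreasing in its first argument and nonincreasing in its second argument: for all a₁ ≤ a₂ and all b, G f (a₁, b) ≤ G f (a₂, b), and for all a and all b₁ ≤ b₂, G f (a, b₂) ≤ G f (a, b₁). -/
/-- For continuous `f`, the Godunov flux is nondecreasing in its
first argument and nonincreasing in its second argument. -/
theorem godunov_monotonicity (f : ℝ → ℝ) (hf : Continuous f) :
    (∀ a₁ a₂ b : ℝ, a₁ ≤ a₂ → godunov f a₁ b ≤ godunov f a₂ b) ∧
    (∀ a b₁ b₂ : ℝ, b₁ ≤ b₂ → godunov f a b₂ ≤ godunov f a b₁) := by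
  have hb : ∀ a b : ℝ, BddBelow (f '' Set.Icc a b) := fun a b =>
    (isCompact_Icc.image hf).bddBelow
  have ha : ∀ a b : ℝ, BddAbove (f '' Set.Icc a b) := fun a b =>
    (isCompact_Icc.image hf).bddAbove
  have hn : ∀ a b : ℝ, a ≤ b → (f '' Set.Icc a b).Nonempty := fun a b h =>
    (Set.nonempty_Icc.2 h).image f
  refine ⟨fun a₁ a₂ b h => ?_, fun a b₁ b₂ h => ?_⟩
  · unfold godunov
    split_ifs with h1 h2 h2
    · exact csInf_le_csInf (hb _ _) (hn _ _ h2) (Set.image_mono (Set.Icc_subset_Icc_left h))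
    · exact (csInf_le (hb _ _) ⟨b, ⟨h1, le_rfl⟩, rfl⟩).trans
        (le_csSup (ha _ _) ⟨b, ⟨le_rfl, (not_le.1 h2).le⟩, rfl⟩)
    · exact absurd (h.trans h2) h1
    · exact csSup_le_csSup (ha _ _) (hn _ _ (not_le.1 h1).le)
        (Set.image_mono (Set.Icc_subset_Icc_right h))
  · unfold godunov
    split_ifs with h1 h2 h2
    · exact csInf_le_csInf (hb _ _) (hn _ _ h2) (Set.image_mono (Set.Icc_subset_Icc_right h))
    · exact (csInf_le (hb _ _) ⟨a, ⟨le_rfl, h1⟩, rfl⟩).trans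
        (le_csSup (ha _ _) ⟨a, ⟨(not_le.1 h2).le, le_rfl⟩, rfl⟩)
    · exact absurd (h2.trans h) h1
    · exact csSup_le_csSup (ha _ _) (hn _ _ (not_le.1 h1).le)
        (Set.image_mono (Set.Icc_subset_Icc_left h))
end

section
/- Let f : ℝ → ℝ be continuous. Then the Godunov numerical flux G f is continuous in each argument: for every fixed b ∈ ℝ, the map a ↦ G f (a, b) is continuous on ℝ, and for every fixed a ∈ ℝ, the map b ↦ G f (a, b) is continuous on ℝ. -/
theorem godunov_joint (f : ℝ → ℝ) (hf : Continuous f) :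
    Continuous fun p : ℝ × ℝ => godunov f p.1 p.2 := by
  let g : ℝ × ℝ → ℝ → ℝ := fun p t => f (p.1 + t • (p.2 - p.1))
  have hg : Continuous ↿g := by
    change Continuous fun q : (ℝ × ℝ) × ℝ => f (q.1.1 + q.2 • (q.1.2 - q.1.1))
    fun_prop
  have himg : ∀ p : ℝ × ℝ, g p '' Set.Icc 0 1 = f '' Set.uIcc p.1 p.2 := by
    intro p
    rw [← segment_eq_uIcc, segment_eq_image', Set.image_image]
  have key : (fun p : ℝ × ℝ => godunov f p.1 p.2) = fun p =>
      if p.1 ≤ p.2 then sInf (g p '' Set.Icc 0 1) else sSup (g p '' Set.Icc 0 1) := by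
    funext p
    unfold godunov
    rw [himg]
    split_ifs with h
    · rw [Set.uIcc_of_le h]
    · rw [Set.uIcc_of_ge (le_of_not_ge h)]
  rw [key]
  refine Continuous.if_le (isCompact_Icc.continuous_sInf hg) (isCompact_Icc.continuous_sSup hg)
    continuous_fst continuous_snd ?_
  intro p hp
  rw [himg, hp]
  simp

/-- For continuous `f`, the Godunov flux is continuous in each
of its arguments separately. -/
theorem godunov_continuity (f : ℝ → ℝ) (hf : Continuous f) :
    (∀ b : ℝ, Continuous fun a => godunov f a b) ∧
    (∀ a : ℝ, Continuous fun b => godunov f a b) := by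
  have h := godunov_joint f hf
  exact ⟨fun b => h.comp (continuous_id.prodMk continuous_const),
    fun a => h.comp (continuous_const.prodMk continuous_id)⟩
end

section
/- Let f₁, f₂ : ℝ → ℝ be continuous, let ρ₁, ρ₂ : ℝ → ℝ be continuous and antitone (nonincreasing), and fix s_K, s_L ∈ ℝ. Then the interface operator Ψ(q) = G f₁ (s_K, ρ₁(q)) + G f₂ (s_L, ρ₂(q)) is continuous and monotone nondecreasing on ℝ. -/
theorem godunov_continuous (f : ℝ → ℝ) (hf : Continuous f) (a : ℝ) :
    Continuous (godunov f a) := by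
  have hF : Continuous ↿(fun (b t : ℝ) => f (a + t • (b - a))) := by
    simp only [Function.HasUncurry.uncurry, smul_eq_mul, id]
    fun_prop
  have h1 := (isCompact_Icc (a := (0:ℝ)) (b := 1)).continuous_sInf hF
  have h2 := (isCompact_Icc (a := (0:ℝ)) (b := 1)).continuous_sSup hF
  have himg : ∀ b, (fun t : ℝ => f (a + t • (b - a))) '' Set.Icc 0 1 = f '' segment ℝ a b := by
    intro b
    rw [segment_eq_image', Set.image_image]
  simp only [himg] at h1 h2
  have h3 := Continuous.if_le h1 h2 (continuous_const (y := a)) continuous_id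
    (by rintro x rfl; simp)
  refine h3.congr fun b => ?_
  unfold godunov
  simp only [id]
  split_ifs with h
  · rw [segment_eq_Icc h]
  · rw [segment_symm, segment_eq_Icc (not_le.mp h).le]

theorem godunov_antitone (f : ℝ → ℝ) (hf : Continuous f) (a : ℝ) :
    Antitone (godunov f a) := by
  intro b c hbc
  have hc : ∀ x y, IsCompact (f '' Set.Icc x y) := fun x y => isCompact_Icc.image hf
  unfold godunov
  split_ifs with h1 h2 h2
  · exact csInf_le_csInf (hc _ _).bddBelow ((Set.nonempty_Icc.2 h2).image f)
      (Set.image_mono (Set.Icc_subset_Icc_right hbc))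
  · have hb := (not_le.mp h2).le
    exact (csInf_le (hc _ _).bddBelow ⟨a, ⟨le_rfl, h1⟩, rfl⟩).trans
      (le_csSup (hc _ _).bddAbove ⟨a, ⟨hb, le_rfl⟩, rfl⟩)
  · exact absurd (h2.trans hbc) h1
  · exact csSup_le_csSup (hc _ _).bddAbove ((Set.nonempty_Icc.2 (not_le.mp h1).le).image f)
      (Set.image_mono (Set.Icc_subset_Icc_left hbc))

/-- The interface operator
`Ψ(q) = G f₁ (s_K, ρ₁(q)) + G f₂ (s_L, ρ₂(q))` built from Godunov fluxes and
continuous antitone functions `ρᵢ` (inverse capillary-pressure curves) is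
continuous and monotone nondecreasing on `ℝ`. -/
theorem interface_operator_continuous_monotone
    (f₁ f₂ ρ₁ ρ₂ : ℝ → ℝ)
    (hf₁ : Continuous f₁) (hf₂ : Continuous f₂)
    (hρ₁c : Continuous ρ₁) (hρ₂c : Continuous ρ₂)
    (hρ₁ : Antitone ρ₁) (hρ₂ : Antitone ρ₂)
    (sK sL : ℝ) :
    Continuous (fun q => godunov f₁ sK (ρ₁ q) + godunov f₂ sL (ρ₂ q)) ∧
    Monotone (fun q => godunov f₁ sK (ρ₁ q) + godunov f₂ sL (ρ₂ q)) := by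
  refine ⟨((godunov_continuous f₁ hf₁ sK).comp hρ₁c).add
    ((godunov_continuous f₂ hf₂ sL).comp hρ₂c), fun p q hpq => ?_⟩
  exact add_le_add (godunov_antitone f₁ hf₁ sK (hρ₁ hpq)) (godunov_antitone f₂ hf₂ sL (hρ₂ hpq))
end
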